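/- arXiv:2412.13080 — 3 statements merged into one kernel-verified Lean document; each statement's English description precedes it below -/
import Mathlib

section
/- There exists a constant C > 0 such that for every R ≥ 0 and every φ ∈ H²(ℝ², ℂ), the function v'φ := −2i (K_R ∗ |φ|²) · ∇φ − (K_R ∗ J[φ]) φ satisfies ‖v'φ‖₂ ≤ C ( ‖φ‖_{H¹}³ + ‖φ‖_{H²} ‖φ‖_{H¹}² ). -/
noncomputable section
open MeasureTheory ENNReal
open scoped RealInnerProductSpace

/-- The plane `ℝ²`. -/
abbrev E2 : Type := EuclideanSpace ℝ (Fin 2)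

/-- The rotation by 90 degrees: `x^⊥ = (-x₂, x₁)`. -/
def perp (x : E2) : E2 := (WithLp.equiv 2 (Fin 2 → ℝ)).symm ![-(x 1), x 0]

/-- The Aharonov–Bohm kernel `K_R(x) = x^⊥ / (max R ‖x‖)²` (with `K_R 0 = 0`,
also when `R = 0`, by the junk-value convention `(0 : ℝ)⁻¹ = 0`). -/
def K (R : ℝ) (x : E2) : E2 := ((max R ‖x‖) ^ 2)⁻¹ • perp x

/-- The standard basis of `ℝ²`. -/
def e2 (j : Fin 2) : E2 := EuclideanSpace.single j 1

/-- Componentwise convolution of the vector kernel `K_R` with a scalar density. -/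
def convKs (R : ℝ) (ρ : E2 → ℝ) (x : E2) : E2 := ∫ y, ρ y • K R (x - y)

/-- Convolution of the vector kernel `K_R` with a vector field, summed over components. -/
def convKv (R : ℝ) (F : E2 → E2) (x : E2) : ℝ := ∫ y, ⟪K R (x - y), F y⟫

/-- The current `J[u] = i(u∇ū - ū∇u) = 2 Im(ū ∇u)`, an `ℝ²`-valued function. -/
def Jf (u : E2 → ℂ) (x : E2) : E2 :=
  (WithLp.equiv 2 (Fin 2 → ℝ)).symm fun j =>
    2 * ((starRingEnd ℂ) (u x) * fderiv ℝ u x (e2 j)).im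

/-- The `H¹` norm `(‖u‖₂² + ‖∇u‖₂²)^{1/2}` (extended-real valued). -/
def H1 (u : E2 → ℂ) : ℝ≥0∞ :=
  (eLpNorm u 2 volume ^ 2 + eLpNorm (fun x => fderiv ℝ u x) 2 volume ^ 2) ^ (1 / 2 : ℝ)

/-- The `H²` norm `(‖u‖₂² + ‖∇u‖₂² + ‖∇²u‖₂²)^{1/2}` (extended-real valued). -/
def H2 (u : E2 → ℂ) : ℝ≥0∞ :=
  (eLpNorm u 2 volume ^ 2 + eLpNorm (fun x => fderiv ℝ u x) 2 volume ^ 2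
    + eLpNorm (fun x => fderiv ℝ (fderiv ℝ u) x) 2 volume ^ 2) ^ (1 / 2 : ℝ)

/-- Local one-dimensional Hardy-type inequality. -/
lemma hardy1d_loc (g g' : ℝ → ℂ) (hg : ∀ r, HasDerivAt g (g' r) r) (hg' : Continuous g') :
    ∫ r in (0:ℝ)..1, ‖g r‖ ^ 2 ≤ ∫ r in (0:ℝ)..1, 3 * (r * (‖g r‖ ^ 2 + ‖g' r‖ ^ 2)) := by
  have hgc : Continuous g := continuous_iff_continuousAt.2 fun r => (hg r).continuousAt
  have hh : ∀ r, HasDerivAt (fun r => ‖g r‖ ^ 2) (2 * ⟪g r, g' r⟫) r := fun r => (hg r).norm_sq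
  have hF : ∀ r, HasDerivAt (fun r : ℝ => (r * (1 - r)) * ‖g r‖ ^ 2)
      ((1 - 2 * r) * ‖g r‖ ^ 2 + (r * (1 - r)) * (2 * ⟪g r, g' r⟫)) r := by
    intro r
    have h1 : HasDerivAt (fun r : ℝ => r * (1 - r)) (1 - 2 * r) r := by
      have := (hasDerivAt_id r).mul ((hasDerivAt_id r).const_sub 1)
      have e : (1 : ℝ) * (1 - id r) + id r * (-1) = 1 - 2 * r := by simp only [id]; ring
      exact e ▸ this
    exact h1.mul (hh r)
  have hc : Continuous fun r : ℝ =>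
      (1 - 2 * r) * ‖g r‖ ^ 2 + (r * (1 - r)) * (2 * ⟪g r, g' r⟫) := by fun_prop
  have h0 := intervalIntegral.integral_eq_sub_of_hasDerivAt (a := 0) (b := 1)
    (fun r _ => hF r) (hc.intervalIntegrable _ _)
  have h0' : ∫ r in (0:ℝ)..1, ((1 - 2 * r) * ‖g r‖ ^ 2 + (r * (1 - r)) * (2 * ⟪g r, g' r⟫)) = 0 := by
    rw [h0]; simp
  have hc2 : Continuous fun r : ℝ => ‖g r‖ ^ 2 := by fun_prop
  have hs := intervalIntegral.integral_sub (hc2.intervalIntegrable 0 1) (hc.intervalIntegrable 0 1)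
    (μ := volume)
  rw [h0', sub_zero] at hs
  rw [← hs]
  apply intervalIntegral.integral_mono_on zero_le_one
  · exact (hc2.sub hc).intervalIntegrable _ _
  · exact Continuous.intervalIntegrable (by fun_prop) _ _
  · intro r hr
    have hin : -(‖g r‖ ^ 2 + ‖g' r‖ ^ 2) ≤ 2 * ⟪g r, g' r⟫ := by
      have := neg_le_of_abs_le (abs_real_inner_le_norm (g r) (g' r))
      nlinarith [sq_nonneg (‖g r‖ - ‖g' r‖)]
    obtain ⟨hr0, hr1⟩ := hr
    have h1 : 0 ≤ r * (1 - r) := mul_nonneg hr0 (by linarith)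
    have h2 := mul_le_mul_of_nonneg_left hin h1
    have h3 : 0 ≤ r * r * (‖g r‖ ^ 2 + ‖g' r‖ ^ 2) := by positivity
    have h4 : 0 ≤ r * ‖g' r‖ ^ 2 := by positivity
    nlinarith

lemma hardy1d (g g' : ℝ → ℂ) (hg : ∀ r, HasDerivAt g (g' r) r) (hg' : Continuous g') :
    ∫⁻ r in Set.Ioi (0:ℝ), ENNReal.ofReal (‖g r‖ ^ 2) ≤
      ∫⁻ r in Set.Ioi (0:ℝ), ENNReal.ofReal (3 * (r * (‖g r‖ ^ 2 + ‖g' r‖ ^ 2))) := by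
  have hgc : Continuous g := continuous_iff_continuousAt.2 fun r => (hg r).continuousAt
  have hu : Set.Ioi (0:ℝ) = Set.Ioc 0 1 ∪ Set.Ioi 1 := (Set.Ioc_union_Ioi_eq_Ioi zero_le_one).symm
  have hd : Disjoint (Set.Ioc (0:ℝ) 1) (Set.Ioi 1) := Set.Ioc_disjoint_Ioi le_rfl
  rw [hu, lintegral_union measurableSet_Ioi hd, lintegral_union measurableSet_Ioi hd]
  gcongr ?_ + ?_
  · have hl := hardy1d_loc g g' hg hg'
    rw [intervalIntegral.integral_of_le zero_le_one, intervalIntegral.integral_of_le zero_le_one] at hl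
    rw [← ofReal_integral_eq_lintegral_ofReal, ← ofReal_integral_eq_lintegral_ofReal]
    · exact ENNReal.ofReal_le_ofReal hl
    · exact (Continuous.integrableOn_Ioc (by fun_prop))
    · filter_upwards [ae_restrict_mem measurableSet_Ioc] with r hr
      have := hr.1.le
      simp only [Pi.zero_apply]; positivity
    · exact (Continuous.integrableOn_Ioc (by fun_prop))
    · filter_upwards with r
      simp only [Pi.zero_apply]; positivity
  · apply setLIntegral_mono' measurableSet_Ioi
    intro r hr
    apply ENNReal.ofReal_le_ofReal
    have hr : 1 < r := hr
    nlinarith [sq_nonneg ‖g r‖, sq_nonneg ‖g' r‖, mul_nonneg (by linarith : 0 ≤ r) (sq_nonneg ‖g' r‖), mul_nonneg (by linarith : 0 ≤ r - 1) (sq_nonneg ‖g r‖)]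

/-- Polar coordinates in the plane. -/
lemma lintegral_polar (F : E2 → ℝ≥0∞) (hF : Measurable F) :
    ∫⁻ z, F z = ∫⁻ ω : Metric.sphere (0 : E2) 1, (∫⁻ r in Set.Ioi (0:ℝ),
      ENNReal.ofReal r * F (r • (ω : E2))) ∂((volume : Measure E2).toSphere) := by
  have hmp := (volume : Measure E2).measurePreserving_homeomorphUnitSphereProd
  have hdim : Module.finrank ℝ E2 - 1 = 1 := by simp
  rw [hdim] at hmp
  have hm : Measurable fun p : Metric.sphere (0 : E2) 1 × Set.Ioi (0:ℝ) =>
      F ((p.2 : ℝ) • (p.1 : E2)) := by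
    apply hF.comp
    fun_prop
  calc ∫⁻ z, F z = ∫⁻ z : ({(0)}ᶜ : Set E2), F z ∂((volume : Measure E2).comap (↑)) := by
        rw [lintegral_subtype_comap (measurableSet_singleton _).compl F, restrict_compl_singleton]
    _ = ∫⁻ p, F ((p.2 : ℝ) • (p.1 : E2)) ∂((volume : Measure E2).toSphere.prod (.volumeIoiPow 1)) := by
        rw [← hmp.lintegral_comp hm]
        apply lintegral_congr
        intro z
        congr 1
        have := (homeomorphUnitSphereProd E2).symm_apply_apply z
        conv_lhs => rw [← this]
        rfl
    _ = _ := by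
        rw [lintegral_prod _ hm.aemeasurable]
        apply lintegral_congr
        intro ω
        have hm2 : Measurable fun r : ℝ => F (r • (ω : E2)) := by
          apply hF.comp; fun_prop
        rw [Measure.volumeIoiPow, lintegral_withDensity_eq_lintegral_mul]
        · have := lintegral_subtype_comap (μ := volume) (measurableSet_Ioi (a := (0:ℝ)))
            (fun r => ENNReal.ofReal r * F (r • (ω : E2)))
          simpa using this
        · fun_prop
        · exact hm2.comp measurable_subtype_coe

lemma hardy2d (f : E2 → ℂ) (hf : ContDiff ℝ 1 f) :
    ∫⁻ z, ENNReal.ofReal (‖f z‖ ^ 2) * ENNReal.ofReal ‖z‖⁻¹ ≤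
      ∫⁻ z, ENNReal.ofReal (3 * (‖f z‖ ^ 2 + ‖fderiv ℝ f z‖ ^ 2)) := by
  have hc : Continuous f := hf.continuous
  have hc' : Continuous (fderiv ℝ f) := hf.continuous_fderiv (by norm_num)
  rw [lintegral_polar _ (by fun_prop), lintegral_polar _ (by fun_prop)]
  apply lintegral_mono
  intro ω
  have hω : ‖(ω : E2)‖ = 1 := by simp
  have h1 := hardy1d (fun r => f (r • (ω : E2))) (fun r => fderiv ℝ f (r • (ω : E2)) ω)
    (fun r => by
      have h2 : HasDerivAt (fun r : ℝ => r • (ω : E2)) (ω : E2) r := by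
        simpa using (hasDerivAt_id r).smul_const (ω : E2)
      exact ((hf.differentiable (by norm_num)) _).hasFDerivAt.comp_hasDerivAt r h2)
    (by fun_prop)
  calc _ = ∫⁻ r in Set.Ioi (0:ℝ), ENNReal.ofReal (‖f (r • (ω : E2))‖ ^ 2) := by
        apply setLIntegral_congr_fun measurableSet_Ioi
        intro r hr
        have hr : 0 < r := hr
        simp only [norm_smul, hω, mul_one, Real.norm_eq_abs, abs_of_pos hr]
        rw [← ENNReal.ofReal_mul (by positivity), ← ENNReal.ofReal_mul hr.le]
        congr 1
        field_simp
    _ ≤ _ := h1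
    _ ≤ _ := by
        apply setLIntegral_mono' measurableSet_Ioi
        intro r hr
        have hr : 0 < r := hr
        rw [← ENNReal.ofReal_mul hr.le]
        apply ENNReal.ofReal_le_ofReal
        have h3 : ‖fderiv ℝ f (r • (ω : E2)) ω‖ ≤ ‖fderiv ℝ f (r • (ω : E2))‖ := by
          simpa [hω] using (fderiv ℝ f (r • (ω : E2))).le_opNorm ω
        rw [mul_left_comm]
        gcongr

lemma eLpNorm_two_sq {F : Type*} [NormedAddCommGroup F] (f : E2 → F) :
    eLpNorm f 2 volume ^ 2 = ∫⁻ z, ENNReal.ofReal (‖f z‖ ^ 2) := by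
  rw [eLpNorm_eq_lintegral_rpow_enorm_toReal (by norm_num) (by norm_num), ← ENNReal.rpow_natCast, ← ENNReal.rpow_mul]
  simp only [ENNReal.toReal_ofNat, Nat.cast_ofNat]
  norm_num

lemma H1_sq (u : E2 → ℂ) :
    H1 u ^ 2 = eLpNorm u 2 volume ^ 2 + eLpNorm (fun x => fderiv ℝ u x) 2 volume ^ 2 := by
  rw [H1, ← ENNReal.rpow_natCast, ← ENNReal.rpow_mul]; norm_num

lemma H2_sq (u : E2 → ℂ) :
    H2 u ^ 2 = eLpNorm u 2 volume ^ 2 + eLpNorm (fun x => fderiv ℝ u x) 2 volume ^ 2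
      + eLpNorm (fun x => fderiv ℝ (fderiv ℝ u) x) 2 volume ^ 2 := by
  rw [H2, ← ENNReal.rpow_natCast, ← ENNReal.rpow_mul]; norm_num

/-- The weight `1/|x-y|`. -/
def wt (x y : E2) : ℝ≥0∞ := ENNReal.ofReal ‖x - y‖⁻¹

lemma hardy_shift (f : E2 → ℂ) (hf : ContDiff ℝ 1 f) (x : E2) :
    ∫⁻ y, ENNReal.ofReal (‖f y‖ ^ 2) * wt x y ≤
      3 * (eLpNorm f 2 volume ^ 2 + eLpNorm (fun x => fderiv ℝ f x) 2 volume ^ 2) := by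
  have hc : Continuous f := hf.continuous
  have hc' : Continuous (fderiv ℝ f) := hf.continuous_fderiv (by norm_num)
  have h := hardy2d (fun z => f (x + z)) (hf.comp (contDiff_const.add contDiff_id))
  have e1 : ∫⁻ y, ENNReal.ofReal (‖f y‖ ^ 2) * wt x y =
      ∫⁻ z, ENNReal.ofReal (‖f (x + z)‖ ^ 2) * ENNReal.ofReal ‖z‖⁻¹ := by
    rw [← lintegral_add_left_eq_self _ x]
    simp [wt]
  have e2 : ∫⁻ z, ENNReal.ofReal (3 * (‖f (x + z)‖ ^ 2 + ‖fderiv ℝ (fun z => f (x + z)) z‖ ^ 2)) =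
      3 * (eLpNorm f 2 volume ^ 2 + eLpNorm (fun x => fderiv ℝ f x) 2 volume ^ 2) := by
    simp only [fderiv_comp_add_left]
    rw [lintegral_add_left_eq_self (fun z => ENNReal.ofReal (3 * (‖f z‖ ^ 2 + ‖fderiv ℝ f z‖ ^ 2))) x,
      eLpNorm_two_sq, eLpNorm_two_sq, ← lintegral_add_left (by fun_prop), ← lintegral_const_mul _ (by fun_prop)]
    apply lintegral_congr
    intro z
    rw [ENNReal.ofReal_mul (by norm_num), ENNReal.ofReal_add (by positivity) (by positivity)]
    simp
  rw [e1, ← e2]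
  exact h

lemma norm_perp (x : E2) : ‖perp x‖ = ‖x‖ := by
  simp [perp, EuclideanSpace.norm_eq, Fin.sum_univ_two, add_comm]

lemma norm_K_le (R : ℝ) (x : E2) : ‖K R x‖ ≤ ‖x‖⁻¹ := by
  rw [K, norm_smul, norm_perp, norm_inv, Real.norm_eq_abs, abs_of_nonneg (sq_nonneg _)]
  rcases eq_or_ne x 0 with rfl | hx
  · simp
  · have hx : 0 < ‖x‖ := norm_pos_iff.2 hx
    have : ‖x‖ ^ 2 ≤ max R ‖x‖ ^ 2 := by gcongr; exact le_max_right _ _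
    calc (max R ‖x‖ ^ 2)⁻¹ * ‖x‖ ≤ (‖x‖ ^ 2)⁻¹ * ‖x‖ := by gcongr
      _ = ‖x‖⁻¹ := by field_simp

lemma convKs_le (R : ℝ) (φ : E2 → ℂ) (hφ : ContDiff ℝ 1 φ) (x : E2) :
    ‖convKs R (fun y => ‖φ y‖ ^ 2) x‖ₑ ≤ 3 * H1 φ ^ 2 := by
  rw [H1_sq]
  refine le_trans ?_ (hardy_shift φ hφ x)
  refine (enorm_integral_le_lintegral_enorm _).trans ?_
  apply lintegral_mono
  intro y
  simp only [wt]
  rw [← ENNReal.ofReal_mul (by positivity), ← ofReal_norm, norm_smul]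
  apply ENNReal.ofReal_le_ofReal
  rw [Real.norm_eq_abs, abs_of_nonneg (by positivity)]
  gcongr
  exact norm_K_le _ _

lemma cs_wt (f g : E2 → ℂ) (hf : Continuous f) (hg : Continuous g) (x : E2) :
    ∫⁻ y, ENNReal.ofReal (‖f y‖ * ‖g y‖) * wt x y ≤
      (∫⁻ y, ENNReal.ofReal (‖f y‖ ^ 2) * wt x y) ^ (1 / 2 : ℝ) *
      (∫⁻ y, ENNReal.ofReal (‖g y‖ ^ 2) * wt x y) ^ (1 / 2 : ℝ) := by
  have hw : Measurable (wt x) := by unfold wt; fun_prop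
  have h := ENNReal.lintegral_mul_le_Lp_mul_Lq (volume.withDensity (wt x)) Real.HolderConjugate.two_two
    (f := fun y => ENNReal.ofReal ‖f y‖) (g := fun y => ENNReal.ofReal ‖g y‖)
    (by fun_prop) (by fun_prop)
  rw [lintegral_withDensity_eq_lintegral_mul _ hw (by fun_prop), lintegral_withDensity_eq_lintegral_mul _ hw (by fun_prop),
    lintegral_withDensity_eq_lintegral_mul _ hw (by fun_prop)] at h
  simp only [Pi.mul_apply] at h
  have e0 : ∀ y, ENNReal.ofReal (‖f y‖ * ‖g y‖) * wt x y
      = wt x y * (ENNReal.ofReal ‖f y‖ * ENNReal.ofReal ‖g y‖) := fun y => by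
    rw [mul_comm, ENNReal.ofReal_mul (norm_nonneg _)]
  have e1 : ∀ u : E2 → ℂ, ∀ y, ENNReal.ofReal (‖u y‖ ^ 2) * wt x y
      = wt x y * (ENNReal.ofReal ‖u y‖) ^ (2 : ℝ) := fun u y => by
    rw [mul_comm, ENNReal.ofReal_pow (norm_nonneg _), ← ENNReal.rpow_natCast]; norm_num
  simp only [e0, e1]
  exact h

lemma norm_e2 (j : Fin 2) : ‖e2 j‖ = 1 := by simp [e2]

lemma norm_Jf_le (u : E2 → ℂ) (y : E2) :
    ‖Jf u y‖ ≤ 2 * (‖u y‖ * ‖fderiv ℝ u y (e2 0)‖ + ‖u y‖ * ‖fderiv ℝ u y (e2 1)‖) := by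
  have hj : ∀ j, |Jf u y j| ≤ 2 * (‖u y‖ * ‖fderiv ℝ u y (e2 j)‖) := by
    intro j
    have : Jf u y j = 2 * ((starRingEnd ℂ) (u y) * fderiv ℝ u y (e2 j)).im := rfl
    rw [this, abs_mul, abs_two]
    gcongr
    refine (Complex.abs_im_le_norm _).trans ?_
    rw [norm_mul, RCLike.norm_conj]
  have h : ‖Jf u y‖ ≤ |Jf u y 0| + |Jf u y 1| := by
    rw [EuclideanSpace.norm_eq, Fin.sum_univ_two]
    apply Real.sqrt_le_iff.2
    refine ⟨by positivity, ?_⟩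
    simp only [Real.norm_eq_abs]
    nlinarith [mul_nonneg (abs_nonneg (Jf u y 0)) (abs_nonneg (Jf u y 1))]
  linarith [hj 0, hj 1]

lemma pd_fderiv (φ : E2 → ℂ) (hφ : ContDiff ℝ 2 φ) (j : Fin 2) (y : E2) :
    ‖fderiv ℝ (fun y => fderiv ℝ φ y (e2 j)) y‖ ≤ ‖fderiv ℝ (fderiv ℝ φ) y‖ := by
  have hd : ContDiff ℝ 1 (fderiv ℝ φ) := hφ.fderiv_right (by norm_num)
  have hdy := (hd.differentiable (by norm_num)) y
  refine ContinuousLinearMap.opNorm_le_bound _ ?_ ?_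
  · exact norm_nonneg (fderiv ℝ (fderiv ℝ φ) y)
  intro v
  have : fderiv ℝ (fun y => fderiv ℝ φ y (e2 j)) y v = fderiv ℝ (fderiv ℝ φ) y v (e2 j) := by
    rw [fderiv_clm_apply hdy (differentiableAt_const _)]
    simp
  rw [this]
  refine (ContinuousLinearMap.le_opNorm _ _).trans ?_
  rw [norm_e2, mul_one]
  exact ContinuousLinearMap.le_opNorm _ _

lemma pd_eLpNorm (φ : E2 → ℂ) (hφ : ContDiff ℝ 2 φ) (j : Fin 2) :
    eLpNorm (fun x => fderiv ℝ (fun y => fderiv ℝ φ y (e2 j)) x) 2 volume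
      ≤ eLpNorm (fun x => fderiv ℝ (fderiv ℝ φ) x) 2 volume := by
  exact eLpNorm_mono (F := E2 →L[ℝ] ℂ) (G := E2 →L[ℝ] E2 →L[ℝ] ℂ)
    (f := fun x => fderiv ℝ (fun y => fderiv ℝ φ y (e2 j)) x)
    (g := fun x => fderiv ℝ (fderiv ℝ φ) x) (pd_fderiv φ hφ j)

lemma pd_eLpNorm' (φ : E2 → ℂ) (j : Fin 2) :
    eLpNorm (fun y => fderiv ℝ φ y (e2 j)) 2 volume
      ≤ eLpNorm (fun x => fderiv ℝ φ x) 2 volume := by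
  refine eLpNorm_mono ?_
  intro y
  have := (fderiv ℝ φ y).le_opNorm (e2 j)
  rwa [norm_e2, mul_one] at this

lemma pd_H2 (φ : E2 → ℂ) (hφ : ContDiff ℝ 2 φ) (j : Fin 2) :
    eLpNorm (fun y => fderiv ℝ φ y (e2 j)) 2 volume ^ 2
      + eLpNorm (fun x => fderiv ℝ (fun y => fderiv ℝ φ y (e2 j)) x) 2 volume ^ 2 ≤ H2 φ ^ 2 := by
  have ha := pow_le_pow_left' (pd_eLpNorm' φ j) 2
  have hb := pow_le_pow_left' (pd_eLpNorm φ hφ j) 2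
  rw [H2_sq]
  exact add_le_add (ha.trans le_add_self) hb

lemma pd_le (φ : E2 → ℂ) (hφ : ContDiff ℝ 2 φ) (j : Fin 2) (x : E2) :
    ∫⁻ y, ENNReal.ofReal (‖φ y‖ * ‖fderiv ℝ φ y (e2 j)‖) * wt x y ≤ 3 * (H1 φ * H2 φ) := by
  have hd : ContDiff ℝ 1 (fderiv ℝ φ) := hφ.fderiv_right (by norm_num)
  have hdj : ContDiff ℝ 1 (fun y => fderiv ℝ φ y (e2 j)) := hd.clm_apply contDiff_const
  have h1 := hardy_shift φ (hφ.of_le (by norm_num)) x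
  have h2 := hardy_shift _ hdj x
  have h3 := pd_H2 φ hφ j
  rw [← H1_sq] at h1
  have h2 := h2.trans (mul_le_mul_right h3 3)
  have hr : ∀ a : ℝ≥0∞, (3 * a ^ 2) ^ (1 / 2 : ℝ) = 3 ^ (1 / 2 : ℝ) * a := by
    intro a
    rw [ENNReal.mul_rpow_of_nonneg _ _ (by norm_num), ← ENNReal.rpow_natCast, ← ENNReal.rpow_mul]
    norm_num
  have h33 : (3 : ℝ≥0∞) ^ (1 / 2 : ℝ) * 3 ^ (1 / 2 : ℝ) = 3 := by
    rw [← ENNReal.rpow_add _ _ (by norm_num) (by norm_num)]; norm_num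
  refine (cs_wt φ _ hφ.continuous hdj.continuous x).trans ?_
  calc _ ≤ (3 * H1 φ ^ 2) ^ (1 / 2 : ℝ) * (3 * H2 φ ^ 2) ^ (1 / 2 : ℝ) := by gcongr
    _ = (3 ^ (1 / 2 : ℝ) * 3 ^ (1 / 2 : ℝ)) * (H1 φ * H2 φ) := by rw [hr, hr]; ring
    _ = _ := by rw [h33]

lemma convKv_le (R : ℝ) (φ : E2 → ℂ) (hφ : ContDiff ℝ 2 φ) (x : E2) :
    ‖convKv R (Jf φ) x‖ₑ ≤ 12 * (H1 φ * H2 φ) := by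
  have hw : Measurable (wt x) := by unfold wt; fun_prop
  have hc : Continuous φ := hφ.continuous
  have hc' : Continuous (fderiv ℝ φ) := hφ.continuous_fderiv (by norm_num)
  refine (enorm_integral_le_lintegral_enorm _).trans ?_
  calc _ ≤ ∫⁻ y, 2 * (ENNReal.ofReal (‖φ y‖ * ‖fderiv ℝ φ y (e2 0)‖) * wt x y
          + ENNReal.ofReal (‖φ y‖ * ‖fderiv ℝ φ y (e2 1)‖) * wt x y) := by
        apply lintegral_mono
        intro y
        simp only []
        rw [← add_mul, ← ENNReal.ofReal_add (by positivity) (by positivity), ← mul_assoc, wt,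
          show (2 : ℝ≥0∞) * ENNReal.ofReal (‖φ y‖ * ‖(fderiv ℝ φ y) (e2 0)‖ + ‖φ y‖ * ‖(fderiv ℝ φ y) (e2 1)‖)
            = ENNReal.ofReal 2 * ENNReal.ofReal (‖φ y‖ * ‖(fderiv ℝ φ y) (e2 0)‖ + ‖φ y‖ * ‖(fderiv ℝ φ y) (e2 1)‖)
            by rw [ENNReal.ofReal_ofNat], ← ENNReal.ofReal_mul (by norm_num),
          ← ENNReal.ofReal_mul (by positivity), ← ofReal_norm]
        apply ENNReal.ofReal_le_ofReal
        refine (norm_inner_le_norm _ _).trans ?_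
        rw [mul_comm]
        gcongr
        · exact norm_Jf_le _ _
        · exact norm_K_le _ _
    _ = 2 * (_ + _) := by
        rw [lintegral_const_mul _ (by fun_prop), lintegral_add_left (by fun_prop)]
    _ ≤ 2 * (3 * (H1 φ * H2 φ) + 3 * (H1 φ * H2 φ)) := by
        gcongr
        · exact pd_le φ hφ 0 x
        · exact pd_le φ hφ 1 x
    _ = _ := by ring

/-- Estimate (2.23): there is `C > 0` such that for every `R ≥ 0` and every
`φ ∈ H²(ℝ², ℂ)`, the function
`v'φ = −2i (K_R ∗ |φ|²)·∇φ − (K_R ∗ J[φ]) φ` satisfies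
`‖v'φ‖₂ ≤ C (‖φ‖_{H¹}³ + ‖φ‖_{H²} ‖φ‖_{H¹}²)`. -/
theorem statement9 :
    ∃ C : ℝ, 0 < C ∧ ∀ R : ℝ, 0 ≤ R →
      ∀ φ : E2 → ℂ, ContDiff ℝ 2 φ → H2 φ < ⊤ →
        eLpNorm
            (fun x =>
              -2 * Complex.I * fderiv ℝ φ x (convKs R (fun y => ‖φ y‖ ^ 2) x)
                - (↑(convKv R (Jf φ) x) : ℂ) * φ x)
            2 volume
          ≤ ENNReal.ofReal C * (H1 φ ^ 3 + H2 φ * H1 φ ^ 2) := by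
  refine ⟨12, by norm_num, ?_⟩
  intro R _ φ hφ hfin
  have hc : Continuous φ := hφ.continuous
  have hc' : Continuous (fderiv ℝ φ) := hφ.continuous_fderiv (by norm_num)
  have hd0 : eLpNorm φ 2 volume ≤ H1 φ := by
    rw [← ENNReal.pow_le_pow_left_iff two_ne_zero, H1_sq]
    exact le_self_add
  have hd1 : eLpNorm (fun x => fderiv ℝ φ x) 2 volume ≤ H1 φ := by
    rw [← ENNReal.pow_le_pow_left_iff two_ne_zero, H1_sq]
    exact le_add_self
  have h12 : H1 φ ≤ H2 φ := by
    rw [← ENNReal.pow_le_pow_left_iff two_ne_zero, H1_sq, H2_sq]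
    exact le_self_add
  have h1fin : H1 φ ≠ ⊤ := (h12.trans_lt hfin).ne
  set A := 3 * H1 φ ^ 2 with hA
  set B := 12 * (H1 φ * H2 φ) with hB
  have hAt : A ≠ ⊤ := ENNReal.mul_ne_top (by norm_num) (ENNReal.pow_ne_top h1fin)
  have hBt : B ≠ ⊤ := ENNReal.mul_ne_top (by norm_num) (ENNReal.mul_ne_top h1fin hfin.ne)
  have hs : ∀ x, ‖convKs R (fun y => ‖φ y‖ ^ 2) x‖ ≤ A.toReal := fun x => by
    rw [← toReal_enorm]
    exact ENNReal.toReal_mono hAt (convKs_le R φ (hφ.of_le (by norm_num)) x)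
  have hv : ∀ x, ‖convKv R (Jf φ) x‖ ≤ B.toReal := fun x => by
    rw [← toReal_enorm]
    exact ENNReal.toReal_mono hBt (convKv_le R φ hφ x)
  calc _ ≤ eLpNorm (fun x => (2 * A.toReal) * ‖fderiv ℝ φ x‖ + B.toReal * ‖φ x‖) 2 volume := by
        apply eLpNorm_mono_real
        intro x
        refine (norm_sub_le _ _).trans ?_
        rw [norm_mul, norm_mul, norm_mul, Complex.norm_real]
        simp only [norm_neg, Complex.norm_ofNat, Complex.norm_I, mul_one]
        gcongr ?_ + ?_ * _
        · rw [mul_assoc]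
          gcongr
          refine (ContinuousLinearMap.le_opNorm _ _).trans ?_
          rw [mul_comm]
          gcongr
          exact hs x
        · exact hv x
    _ ≤ eLpNorm (fun x => (2 * A.toReal) * ‖fderiv ℝ φ x‖) 2 volume
        + eLpNorm (fun x => B.toReal * ‖φ x‖) 2 volume :=
        eLpNorm_add_le (Continuous.aestronglyMeasurable (by fun_prop))
          (Continuous.aestronglyMeasurable (by fun_prop)) (by norm_num)
    _ = 2 * A * eLpNorm (fun x => fderiv ℝ φ x) 2 volume + B * eLpNorm φ 2 volume := by
        have e1 := eLpNorm_const_smul (2 * A.toReal) (fun x => ‖fderiv ℝ φ x‖) 2 volume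
        have e2 := eLpNorm_const_smul B.toReal (fun x => ‖φ x‖) 2 volume
        rw [eLpNorm_norm] at e1 e2
        have t1 : ‖2 * A.toReal‖ₑ = 2 * A := by
          rw [Real.enorm_eq_ofReal (by positivity), ENNReal.ofReal_mul (by norm_num),
            ENNReal.ofReal_toReal hAt]; norm_num
        have t2 : ‖B.toReal‖ₑ = B := by
          rw [Real.enorm_eq_ofReal (by positivity), ENNReal.ofReal_toReal hBt]
        rw [t1] at e1
        rw [t2] at e2
        rw [← e1, ← e2]
        rfl
    _ ≤ 2 * A * H1 φ + B * H1 φ := by gcongr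
    _ = 6 * H1 φ ^ 3 + 12 * (H2 φ * H1 φ ^ 2) := by rw [hA, hB]; ring
    _ ≤ 12 * H1 φ ^ 3 + 12 * (H2 φ * H1 φ ^ 2) := by
        gcongr; norm_num
    _ = _ := by rw [← mul_add]; norm_num
end
end

section
/- There exists a constant C > 0 such that for every R with 0 < R < e^{-1} and every φ ∈ H¹(ℝ², ℂ), 4 ∬_{ℝ²×ℝ²} |K_R(x − y) · ∇φ(x)|² |φ(y)|² dx dy ≤ C |log R|² ‖φ‖_{H¹}⁴. (The left-hand side equals ‖v(x−y) φ(x)φ(y)‖²_{L²(ℝ⁴)} for the mixed two-body operator v(x−y) = −i∇_x·∇^⊥w_R(x−y) + ∇^⊥w_R(x−y)·(−i∇_x).) -/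
noncomputable section
open MeasureTheory ENNReal
open scoped RealInnerProductSpace

lemma polar_E2 (f : E2 → ℝ≥0∞) (hf : Measurable f) :
    ∫⁻ x, f x = ∫⁻ θ : Metric.sphere (0 : E2) 1, (∫⁻ r in Set.Ioi (0 : ℝ),
      ENNReal.ofReal r * f (r • (θ : E2))) ∂((volume : Measure E2).toSphere) := by
  have h1 : ∫⁻ x, f x = ∫⁻ x : ({(0 : E2)}ᶜ : Set E2), f x.1 ∂((volume : Measure E2).comap Subtype.val) := by
    rw [lintegral_subtype_comap (measurableSet_singleton _).compl f, restrict_compl_singleton]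
  have hm : Measurable (fun p : Metric.sphere (0 : E2) 1 × Set.Ioi (0 : ℝ) =>
      f ((p.2 : ℝ) • (p.1 : E2))) := by
    apply hf.comp
    fun_prop
  have h2 := (volume : Measure E2).measurePreserving_homeomorphUnitSphereProd.lintegral_comp hm
  rw [h1]
  have h3 : ∀ x : ({(0 : E2)}ᶜ : Set E2), f x.1 =
      f (((homeomorphUnitSphereProd E2 x).2 : ℝ) • ((homeomorphUnitSphereProd E2 x).1 : E2)) := by
    intro x
    congr 1
    have hx : ‖(x : E2)‖ ≠ 0 := norm_ne_zero_iff.2 x.2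
    simp [smul_smul, hx]
  simp_rw [h3]
  rw [h2, lintegral_prod _ hm.aemeasurable]
  congr 1
  ext θ
  have hd : Module.finrank ℝ E2 - 1 = 1 := by simp
  rw [hd, Measure.volumeIoiPow, lintegral_withDensity_eq_lintegral_mul₀]
  · rw [← lintegral_subtype_comap measurableSet_Ioi]
    simp
  · fun_prop
  · apply Measurable.aemeasurable
    apply hf.comp
    fun_prop

/-- radial weight -/
def kw (R r : ℝ) : ℝ := (r / (max R r) ^ 2) ^ 2

lemma norm_K_sq (R : ℝ) (x : E2) : ‖K R x‖ ^ 2 = kw R ‖x‖ := by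
  rw [K, norm_smul, norm_perp, kw, norm_inv, Real.norm_of_nonneg (by positivity)]
  ring

lemma add_sq_le_two (a b : ℝ≥0∞) : (a + b) ^ 2 ≤ 2 * a ^ 2 + 2 * b ^ 2 := by
  by_cases ha : a = ⊤
  · simp [ha]
  by_cases hb : b = ⊤
  · simp [hb]
  lift a to NNReal using ha
  lift b to NNReal using hb
  norm_cast
  rw [← NNReal.coe_le_coe]
  push_cast
  nlinarith [sq_nonneg ((a : ℝ) - b)]

lemma enorm_sub_le_lint (h : ℝ → ℂ) (hh : Differentiable ℝ h) {r s : ℝ} (hrs : r ≤ s) :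
    ‖h s - h r‖ₑ ≤ ∫⁻ t in Set.Ioc r s, ‖deriv h t‖ₑ := by
  by_cases hi : ∫⁻ t in Set.Ioc r s, ‖deriv h t‖ₑ = ⊤
  · simp [hi]
  have hint : IntervalIntegrable (deriv h) volume r s := by
    rw [intervalIntegrable_iff_integrableOn_Ioc_of_le hrs]
    exact ⟨(measurable_deriv h).aestronglyMeasurable, lt_top_iff_ne_top.2 hi⟩
  rw [← intervalIntegral.integral_eq_sub_of_hasDerivAt (fun x _ => (hh x).hasDerivAt) hint,
    intervalIntegral.integral_of_le hrs]
  exact enorm_integral_le_lintegral_enorm _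

lemma lint_inv {r s : ℝ} (hr : 0 < r) (hrs : r ≤ s) :
    ∫⁻ t in Set.Ioc r s, ENNReal.ofReal (1 / t) = ENNReal.ofReal (Real.log (s / r)) := by
  have hs : 0 < s := hr.trans_le hrs
  rw [← integral_one_div_of_pos hr hs, intervalIntegral.integral_of_le hrs,
    ofReal_integral_eq_lintegral_ofReal]
  · have : IntervalIntegrable (fun t : ℝ => 1 / t) volume r s := by
      apply intervalIntegral.intervalIntegrable_one_div
      · intro x hx
        rw [Set.uIcc_of_le hrs] at hx
        exact (hr.trans_le hx.1).ne'
      · fun_prop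
    rwa [intervalIntegrable_iff_integrableOn_Ioc_of_le hrs] at this
  · filter_upwards [ae_restrict_mem measurableSet_Ioc] with t ht
    have : 0 < t := hr.trans ht.1
    simp only [Pi.zero_apply]
    positivity

lemma cs_lint (h : ℝ → ℂ) {r s : ℝ} (hr : 0 < r) (hrs : r ≤ s) :
    (∫⁻ t in Set.Ioc r s, ‖deriv h t‖ₑ) ^ 2 ≤ ENNReal.ofReal (Real.log (s / r)) *
      ∫⁻ t in Set.Ioc r s, ENNReal.ofReal t * ‖deriv h t‖ₑ ^ 2 := by
  have hm := (measurable_deriv h).enorm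
  have H := ENNReal.lintegral_mul_le_Lp_mul_Lq (volume.restrict (Set.Ioc r s))
    (p := 2) (q := 2) (by constructor <;> norm_num)
    (f := fun t => ENNReal.ofReal (1 / Real.sqrt t))
    (g := fun t => ENNReal.ofReal (Real.sqrt t) * ‖deriv h t‖ₑ)
    (by fun_prop) (by fun_prop)
  have e0 : ∫⁻ t in Set.Ioc r s, ‖deriv h t‖ₑ = ∫⁻ t in Set.Ioc r s,
      ((fun t => ENNReal.ofReal (1 / Real.sqrt t)) *
        (fun t => ENNReal.ofReal (Real.sqrt t) * ‖deriv h t‖ₑ)) t := by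
    apply setLIntegral_congr_fun measurableSet_Ioc
    intro t ht
    have : 0 < t := hr.trans ht.1
    have h2 := Real.sqrt_pos.2 this
    simp only [Pi.mul_apply]
    rw [← mul_assoc, ← ENNReal.ofReal_mul (by positivity), one_div_mul_cancel h2.ne']
    simp
  have e1 : ∫⁻ t in Set.Ioc r s, (ENNReal.ofReal (1 / Real.sqrt t)) ^ (2 : ℝ) =
      ENNReal.ofReal (Real.log (s / r)) := by
    rw [← lint_inv hr hrs]
    apply setLIntegral_congr_fun measurableSet_Ioc
    intro t ht
    have : 0 < t := hr.trans ht.1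
    simp only [ENNReal.rpow_two]
    rw [← ENNReal.ofReal_pow (by positivity), div_pow, Real.sq_sqrt this.le, one_pow]
  have e2 : ∫⁻ t in Set.Ioc r s, (ENNReal.ofReal (Real.sqrt t) * ‖deriv h t‖ₑ) ^ (2 : ℝ) =
      ∫⁻ t in Set.Ioc r s, ENNReal.ofReal t * ‖deriv h t‖ₑ ^ 2 := by
    apply setLIntegral_congr_fun measurableSet_Ioc
    intro t ht
    have : 0 < t := hr.trans ht.1
    simp only [ENNReal.rpow_two]
    rw [mul_pow, ← ENNReal.ofReal_pow (by positivity), Real.sq_sqrt this.le]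
  rw [← e0, e1, e2] at H
  calc _ ≤ _ := pow_le_pow_left' H 2
    _ = _ := by
      rw [mul_pow, ← ENNReal.rpow_natCast, ← ENNReal.rpow_natCast, ← ENNReal.rpow_mul,
        ← ENNReal.rpow_mul]
      norm_num

lemma ptw (h : ℝ → ℂ) (hh : Differentiable ℝ h) {r s : ℝ} (hr : 0 < r) (hrs : r ≤ s)
    (hs : s ≤ 2) :
    ‖h r‖ₑ ^ 2 ≤ 2 * ‖h s‖ₑ ^ 2 + 2 * (ENNReal.ofReal (Real.log (2 / r)) *
      ∫⁻ t in Set.Ioi 0, ENNReal.ofReal t * ‖deriv h t‖ₑ ^ 2) := by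
  have h1 : ‖h r‖ₑ ≤ ‖h s‖ₑ + ‖h s - h r‖ₑ := by
    have : h r = h s - (h s - h r) := by ring
    conv_lhs => rw [this]
    exact enorm_sub_le
  calc _ ≤ _ := pow_le_pow_left' h1 2
    _ ≤ _ := add_sq_le_two _ _
    _ ≤ _ := by
      gcongr
      refine (pow_le_pow_left' (enorm_sub_le_lint h hh hrs) 2).trans
        ((cs_lint h hr hrs).trans ?_)
      gcongr
      · exact div_pos (hr.trans_le hrs) hr
      · exact fun t ht => hr.trans ht.1

/-- weighted energy on the ray -/
def NN (h : ℝ → ℂ) : ℝ≥0∞ :=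
  ∫⁻ t in Set.Ioi 0, ENNReal.ofReal t * (‖h t‖ₑ ^ 2 + ‖deriv h t‖ₑ ^ 2)

lemma ptw2 (h : ℝ → ℂ) (hh : Differentiable ℝ h) {r : ℝ} (hr : 0 < r) (hr1 : r ≤ 1) :
    ‖h r‖ₑ ^ 2 ≤ ENNReal.ofReal (2 * (1 + Real.log (2 / r))) * NN h := by
  have hm := hh.continuous.measurable.enorm
  have hm' := (measurable_deriv h).enorm
  have hl : 0 ≤ Real.log (2 / r) := Real.log_nonneg (by rw [le_div_iff₀ hr]; linarith)
  set G := ∫⁻ t in Set.Ioi 0, ENNReal.ofReal t * ‖deriv h t‖ₑ ^ 2 with hG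
  have hGN : G ≤ NN h := by
    apply lintegral_mono
    intro t
    dsimp only
    gcongr
    exact le_add_self
  have havg : ∫⁻ s in Set.Ioc (1 : ℝ) 2, ‖h s‖ₑ ^ 2 ≤ NN h := by
    calc _ ≤ ∫⁻ s in Set.Ioc (1 : ℝ) 2, ENNReal.ofReal s * (‖h s‖ₑ ^ 2 + ‖deriv h s‖ₑ ^ 2) := by
          apply setLIntegral_mono' measurableSet_Ioc
          intro s hs
          calc ‖h s‖ₑ ^ 2 = 1 * ‖h s‖ₑ ^ 2 := by simp
            _ ≤ _ := by
              gcongr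
              · simpa using hs.1.le
              · exact le_self_add
      _ ≤ _ := lintegral_mono_set (fun t ht => lt_trans one_pos ht.1)
  have hvol : volume (Set.Ioc (1 : ℝ) 2) = 1 := by norm_num
  calc ‖h r‖ₑ ^ 2 = ∫⁻ s in Set.Ioc (1 : ℝ) 2, ‖h r‖ₑ ^ 2 := by simp [hvol]
    _ ≤ ∫⁻ s in Set.Ioc (1 : ℝ) 2, (2 * ‖h s‖ₑ ^ 2 + 2 * (ENNReal.ofReal (Real.log (2 / r)) * G)) := by
        apply setLIntegral_mono' measurableSet_Ioc
        intro s hs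
        exact ptw h hh hr (hr1.trans hs.1.le) hs.2
    _ = 2 * (∫⁻ s in Set.Ioc (1 : ℝ) 2, ‖h s‖ₑ ^ 2) + 2 * (ENNReal.ofReal (Real.log (2 / r)) * G) := by
        rw [lintegral_add_left (by fun_prop), lintegral_const_mul _ (by fun_prop)]
        simp [hvol]
    _ ≤ 2 * NN h + 2 * (ENNReal.ofReal (Real.log (2 / r)) * NN h) := by gcongr
    _ = _ := by
        rw [ENNReal.ofReal_mul (by norm_num), ENNReal.ofReal_add (by norm_num) hl]
        simp
        ring

lemma kw_nonneg (R r : ℝ) : 0 ≤ kw R r := sq_nonneg _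

lemma ray (h : ℝ → ℂ) (hh : Differentiable ℝ h) {R : ℝ} (hR : 0 < R) (hR1 : R < Real.exp (-1)) :
    ∫⁻ r in Set.Ioi 0, ENNReal.ofReal r * (ENNReal.ofReal (kw R r) * ‖h r‖ₑ ^ 2) ≤
      ENNReal.ofReal (15 * (-Real.log R) ^ 2) * NN h := by
  set L := -Real.log R with hL
  have hL1 : 1 ≤ L := by
    have := (Real.log_lt_iff_lt_exp hR).2 hR1
    linarith
  have hR2 : R ≤ 1 := by
    have : Real.exp (-1) ≤ 1 := Real.exp_le_one_iff.2 (by norm_num)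
    linarith
  have hlog2 : Real.log 2 ≤ 1 := by linarith [Real.log_two_lt_d9]
  have A : ∫⁻ r in Set.Ioc 0 R, ENNReal.ofReal r * (ENNReal.ofReal (kw R r) * ‖h r‖ₑ ^ 2) ≤
      ENNReal.ofReal (8 * L ^ 2) * NN h := by
    calc _ ≤ ∫⁻ r in Set.Ioc 0 R, ENNReal.ofReal (8 * L / R) * NN h := by
          apply setLIntegral_mono' measurableSet_Ioc
          intro r hr
          obtain ⟨h0, h1⟩ := hr
          calc _ ≤ ENNReal.ofReal r * (ENNReal.ofReal (kw R r) *
                (ENNReal.ofReal (2 * (1 + Real.log (2 / r))) * NN h)) := by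
                gcongr
                exact ptw2 h hh h0 (h1.trans hR2)
            _ = ENNReal.ofReal (r * (kw R r * (2 * (1 + Real.log (2 / r))))) * NN h := by
                rw [ENNReal.ofReal_mul h0.le, ENNReal.ofReal_mul (kw_nonneg _ _)]
                ring
            _ ≤ _ := by
                gcongr
                rw [kw, max_eq_left h1]
                have e : Real.log (2 / r) = Real.log 2 + L + Real.log (R / r) := by
                  rw [Real.log_div (by norm_num) h0.ne', Real.log_div hR.ne' h0.ne', hL]; ring
                have e' : Real.log (R / r) ≤ R / r - 1 := Real.log_le_sub_one_of_pos (by positivity)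
                have e3 : 2 * (1 + Real.log (2 / r)) ≤ 2 * (3 * L + R / r) := by
                  rw [e]; linarith
                have hq : r / R ≤ 1 := (div_le_one hR).2 h1
                have hq0 : 0 < r / R := by positivity
                calc r * ((r / R ^ 2) ^ 2 * (2 * (1 + Real.log (2 / r))))
                    ≤ r * ((r / R ^ 2) ^ 2 * (2 * (3 * L + R / r))) := by gcongr
                  _ = (6 * L * (r / R) ^ 3 + 2 * (r / R) ^ 2) / R := by
                    field_simp
                    ring
                  _ ≤ (6 * L * 1 + 2 * 1) / R := by
                    gcongr
                    · exact pow_le_one₀ hq0.le hq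
                    · exact pow_le_one₀ hq0.le hq
                  _ ≤ _ := by
                    gcongr; linarith
      _ = ENNReal.ofReal (8 * L) * NN h := by
          simp only [lintegral_const, Measure.restrict_apply, MeasurableSet.univ, Set.univ_inter,
            Real.volume_Ioc, sub_zero]
          rw [mul_right_comm, ← ENNReal.ofReal_mul (by positivity), div_mul_cancel₀ _ hR.ne']
      _ ≤ _ := by gcongr; nlinarith
  have B : ∫⁻ r in Set.Ioc R 1, ENNReal.ofReal r * (ENNReal.ofReal (kw R r) * ‖h r‖ₑ ^ 2) ≤
      ENNReal.ofReal (6 * L ^ 2) * NN h := by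
    calc _ ≤ ∫⁻ r in Set.Ioc R 1, ENNReal.ofReal (1 / r) * (ENNReal.ofReal (6 * L) * NN h) := by
          apply setLIntegral_mono' measurableSet_Ioc
          intro r hr
          obtain ⟨h0, h1⟩ := hr
          have hr0 : 0 < r := hR.trans h0
          calc _ ≤ ENNReal.ofReal r * (ENNReal.ofReal (kw R r) *
                (ENNReal.ofReal (2 * (1 + Real.log (2 / r))) * NN h)) := by
                gcongr
                exact ptw2 h hh hr0 h1
            _ = ENNReal.ofReal (r * (kw R r * (2 * (1 + Real.log (2 / r))))) * NN h := by
                rw [ENNReal.ofReal_mul hr0.le, ENNReal.ofReal_mul (kw_nonneg _ _)]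
                ring
            _ ≤ ENNReal.ofReal (1 / r * (6 * L)) * NN h := by
                refine mul_le_mul_left (ENNReal.ofReal_le_ofReal ?_) _
                rw [kw, max_eq_right h0.le]
                have e : Real.log (2 / r) ≤ 1 + L := by
                  rw [Real.log_div (by norm_num) hr0.ne']
                  have := Real.log_le_log hR h0.le
                  linarith
                calc r * ((r / r ^ 2) ^ 2 * (2 * (1 + Real.log (2 / r))))
                    = 1 / r * (2 * (1 + Real.log (2 / r))) := by field_simp
                  _ ≤ _ := mul_le_mul_of_nonneg_left (by linarith) (by positivity)
            _ = _ := by rw [ENNReal.ofReal_mul (by positivity)]; ring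
      _ = ENNReal.ofReal L * (ENNReal.ofReal (6 * L) * NN h) := by
          rw [lintegral_mul_const _ (by fun_prop), lint_inv hR hR2]
          simp [hL]
      _ ≤ _ := by
          rw [← mul_assoc, ← ENNReal.ofReal_mul (by positivity)]
          apply le_of_eq
          congr 2
          ring
  have D : ∫⁻ r in Set.Ioi 1, ENNReal.ofReal r * (ENNReal.ofReal (kw R r) * ‖h r‖ₑ ^ 2) ≤
      ENNReal.ofReal (L ^ 2) * NN h := by
    calc _ ≤ ∫⁻ s in Set.Ioi (1 : ℝ), ENNReal.ofReal s * (‖h s‖ₑ ^ 2 + ‖deriv h s‖ₑ ^ 2) := by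
          apply setLIntegral_mono' measurableSet_Ioi
          intro s hs
          have hs : 1 < s := hs
          gcongr
          calc _ ≤ 1 * ‖h s‖ₑ ^ 2 := by
                gcongr
                rw [ENNReal.ofReal_le_one, kw, max_eq_right (by linarith)]
                apply pow_le_one₀ (by positivity)
                rw [div_le_one (by positivity)]
                nlinarith
            _ ≤ _ := by rw [one_mul]; exact le_self_add
      _ ≤ NN h := lintegral_mono_set (fun t (ht : 1 < t) => (lt_trans one_pos ht : 0 < t))
      _ = 1 * NN h := by simp
      _ ≤ _ := by
          gcongr
          rw [ENNReal.one_le_ofReal]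
          nlinarith
  have hset : Set.Ioi (0 : ℝ) = (Set.Ioc 0 R ∪ Set.Ioc R 1) ∪ Set.Ioi 1 := by
    rw [Set.Ioc_union_Ioc_eq_Ioc hR.le hR2, Set.Ioc_union_Ioi_eq_Ioi zero_le_one]
  rw [hset]
  refine (lintegral_union_le _ _ _).trans ((add_le_add_left (lintegral_union_le _ _ _) _).trans ?_)
  refine (add_le_add (add_le_add A B) D).trans ?_
  rw [← add_mul, ← add_mul, ← ENNReal.ofReal_add (by positivity) (by positivity),
    ← ENNReal.ofReal_add (by positivity) (by positivity)]
  gcongr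
  linarith

lemma key (φ : E2 → ℂ) (hφ : Differentiable ℝ φ) {R : ℝ} (hR : 0 < R)
    (hR1 : R < Real.exp (-1)) (x : E2) :
    ∫⁻ y, ENNReal.ofReal (‖K R (x - y)‖ ^ 2) * ‖φ y‖ₑ ^ 2 ≤
      ENNReal.ofReal (15 * (-Real.log R) ^ 2) *
        ∫⁻ y, (‖φ y‖ₑ ^ 2 + ‖fderiv ℝ φ y‖ₑ ^ 2) := by
  have hm := hφ.continuous.measurable
  have hm' := measurable_fderiv ℝ φ
  have hkw : Measurable (kw R) := by unfold kw; fun_prop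
  have t1 : ∫⁻ y, ENNReal.ofReal (‖K R (x - y)‖ ^ 2) * ‖φ y‖ₑ ^ 2 =
      ∫⁻ u, ENNReal.ofReal (kw R ‖u‖) * ‖φ (x - u)‖ₑ ^ 2 := by
    rw [← lintegral_sub_left_eq_self _ x]
    simp [norm_K_sq]
  have t2 : ∫⁻ y, (‖φ y‖ₑ ^ 2 + ‖fderiv ℝ φ y‖ₑ ^ 2) =
      ∫⁻ u, (‖φ (x - u)‖ₑ ^ 2 + ‖fderiv ℝ φ (x - u)‖ₑ ^ 2) := by
    rw [← lintegral_sub_left_eq_self _ x]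
  have m1 : Measurable (fun u => ENNReal.ofReal (kw R ‖u‖) * ‖φ (x - u)‖ₑ ^ 2) := by
    have := hm.comp (measurable_const.sub measurable_id : Measurable (fun u => x - u))
    have h2 := this.enorm
    have h3 : Measurable (fun u : E2 => kw R ‖u‖) := hkw.comp measurable_norm
    exact h3.ennreal_ofReal.mul (h2.pow_const 2)
  have m2 : Measurable (fun u => ‖φ (x - u)‖ₑ ^ 2 + ‖fderiv ℝ φ (x - u)‖ₑ ^ 2) := by
    have := hm.comp (measurable_const.sub measurable_id : Measurable (fun u => x - u))
    have h' := hm'.comp (measurable_const.sub measurable_id : Measurable (fun u => x - u))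
    exact (this.enorm.pow_const 2).add (h'.enorm.pow_const 2)
  rw [t1, t2, polar_E2 _ m1, polar_E2 _ m2, ← lintegral_const_mul' _ _ ENNReal.ofReal_ne_top]
  apply lintegral_mono
  intro θ
  have hθ : ‖(θ : E2)‖ = 1 := by simp
  have hd : ∀ r : ℝ, HasDerivAt (fun r : ℝ => φ (x - r • (θ : E2)))
      (fderiv ℝ φ (x - r • (θ : E2)) (-(θ : E2))) r := by
    intro r
    have a : HasDerivAt (fun r : ℝ => x - r • (θ : E2)) (-(θ : E2)) r := by
      simpa using ((hasDerivAt_id r).smul_const (θ : E2)).const_sub x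
    exact (hφ _).hasFDerivAt.comp_hasDerivAt r a
  have H := ray (fun r => φ (x - r • (θ : E2))) (fun r => (hd r).differentiableAt) hR hR1
  refine le_trans (le_of_eq ?_) (H.trans ?_)
  · apply setLIntegral_congr_fun measurableSet_Ioi
    intro r hr
    have hr : 0 < r := hr
    simp [norm_smul, abs_of_pos hr]
  · dsimp only
    gcongr
    unfold NN
    apply lintegral_mono
    intro r
    dsimp only
    gcongr
    rw [(hd r).deriv]
    calc _ ≤ ‖fderiv ℝ φ (x - r • (θ : E2))‖ₑ * ‖(-(θ : E2))‖ₑ := ContinuousLinearMap.le_opENorm _ _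
      _ = _ := by simp [← ofReal_norm]

lemma H1_sq_s10 (φ : E2 → ℂ) (hφ : Differentiable ℝ φ) :
    H1 φ ^ 2 = ∫⁻ y, (‖φ y‖ₑ ^ 2 + ‖fderiv ℝ φ y‖ₑ ^ 2) := by
  have hm := hφ.continuous.measurable.enorm
  rw [H1, ← ENNReal.rpow_natCast, ← ENNReal.rpow_mul, lintegral_add_left (by fun_prop),
    eLpNorm_eq_lintegral_rpow_enorm_toReal (by norm_num) (by norm_num),
    eLpNorm_eq_lintegral_rpow_enorm_toReal (by norm_num) (by norm_num)]
  rw [← ENNReal.rpow_natCast, ← ENNReal.rpow_natCast, ← ENNReal.rpow_mul, ← ENNReal.rpow_mul]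
  norm_num

theorem statement10 :
    ∃ C : ℝ, 0 < C ∧ ∀ R : ℝ, 0 < R → R < Real.exp (-1) →
      ∀ φ : E2 → ℂ, Differentiable ℝ φ → H1 φ < ⊤ →
        ∫⁻ z : E2 × E2,
            ENNReal.ofReal (4 * ‖fderiv ℝ φ z.1 (K R (z.1 - z.2))‖ ^ 2 * ‖φ z.2‖ ^ 2)
          ≤ ENNReal.ofReal (C * (-Real.log R) ^ 2) * H1 φ ^ 4 := by
  refine ⟨60, by norm_num, fun R hR hR1 φ hφ hfin => ?_⟩
  have hm' := (measurable_fderiv ℝ φ).enorm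
  set M := ∫⁻ y, (‖φ y‖ₑ ^ 2 + ‖fderiv ℝ φ y‖ₑ ^ 2) with hM
  set c := ENNReal.ofReal (15 * (-Real.log R) ^ 2) with hc
  have e4 : H1 φ ^ 4 = M * M := by
    rw [hM, ← H1_sq_s10 φ hφ]; ring
  have ec : ENNReal.ofReal (60 * (-Real.log R) ^ 2) = 4 * c := by
    rw [hc, show (60 : ℝ) * (-Real.log R) ^ 2 = 4 * (15 * (-Real.log R) ^ 2) by ring,
      ENNReal.ofReal_mul (by norm_num)]
    simp
  rw [e4, ec]
  refine (lintegral_prod_le _).trans ?_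
  calc _ ≤ ∫⁻ x, (4 * ‖fderiv ℝ φ x‖ₑ ^ 2) * (c * M) := by
        apply lintegral_mono
        intro x
        calc _ ≤ ∫⁻ y, (4 * ‖fderiv ℝ φ x‖ₑ ^ 2) *
              (ENNReal.ofReal (‖K R (x - y)‖ ^ 2) * ‖φ y‖ₑ ^ 2) := by
              apply lintegral_mono
              intro y
              dsimp only
              calc _ ≤ ENNReal.ofReal (4 * ‖fderiv ℝ φ x‖ ^ 2 * (‖K R (x - y)‖ ^ 2 * ‖φ y‖ ^ 2)) := by
                    apply ENNReal.ofReal_le_ofReal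
                    have := ContinuousLinearMap.le_opNorm (fderiv ℝ φ x) (K R (x - y))
                    have h2 := pow_le_pow_left₀ (norm_nonneg _) this 2
                    calc _ ≤ 4 * (‖fderiv ℝ φ x‖ * ‖K R (x - y)‖) ^ 2 * ‖φ y‖ ^ 2 := by gcongr
                      _ = _ := by ring
                _ = _ := by
                    rw [ENNReal.ofReal_mul (by positivity), ENNReal.ofReal_mul (by positivity),
                      ENNReal.ofReal_mul (by positivity), ENNReal.ofReal_pow (norm_nonneg (fderiv ℝ φ x)),
                      ENNReal.ofReal_pow (norm_nonneg (φ y)), ofReal_norm, ofReal_norm]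
                    simp
          _ = (4 * ‖fderiv ℝ φ x‖ₑ ^ 2) *
              ∫⁻ y, (ENNReal.ofReal (‖K R (x - y)‖ ^ 2) * ‖φ y‖ₑ ^ 2) := by
              apply lintegral_const_mul'
              finiteness
          _ ≤ _ := by
              exact mul_le_mul_right (key φ hφ hR hR1 x) _
    _ = 4 * (∫⁻ x, ‖fderiv ℝ φ x‖ₑ ^ 2) * (c * M) := by
        rw [lintegral_mul_const _ (by fun_prop), lintegral_const_mul _ (by fun_prop)]
    _ ≤ 4 * M * (c * M) := by
        gcongr
        apply lintegral_mono
        intro x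
        exact le_add_self
    _ = _ := by ring
end
end

section
/- There exists a constant C > 0 such that for every R with 0 < R < e^{-1} and every φ ∈ H¹(ℝ², ℂ), ∭_{(ℝ²)³} ( K_R(x − y) · K_R(x − z) )² |φ(x)|² |φ(y)|² |φ(z)|² dx dy dz ≤ C |log R|² ‖φ‖_{H¹}⁶. -/
noncomputable section
open MeasureTheory ENNReal
open scoped RealInnerProductSpace

namespace S12

lemma line_bound (g g' : ℝ → ℂ) (hd : ∀ t, HasDerivAt g (g' t) t) (hm : Measurable g')
    (hg : ∫⁻ t, ‖g t‖ₑ < ⊤) (a : ℝ) : ‖g a‖ₑ ≤ ∫⁻ t, ‖g' t‖ₑ := by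
  by_cases h : ∫⁻ t, ‖g' t‖ₑ = ⊤
  · rw [h]; exact le_top
  have hcont : Continuous g := continuous_iff_continuousAt.2 fun t => (hd t).continuousAt
  have i1 : Integrable g := ⟨hcont.aestronglyMeasurable, hg⟩
  have i2 : Integrable g' := ⟨hm.aestronglyMeasurable, lt_top_iff_ne_top.2 h⟩
  have h0 := tendsto_zero_of_hasDerivAt_of_integrableOn_Iic (a := a)
    (fun x _ => hd x) i2.integrableOn i1.integrableOn
  have h1 := integral_Iic_of_hasDerivAt_of_tendsto' (a := a)
    (fun x _ => hd x) i2.integrableOn h0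
  rw [sub_zero] at h1
  rw [← h1]
  exact (enorm_integral_le_lintegral_enorm _).trans (setLIntegral_le_lintegral _ _)

def pp (s : ℝ × ℝ) : E2 := WithLp.toLp 2 ![s.1, s.2]

lemma pp_mp : MeasurePreserving pp volume volume := by
  have h := (PiLp.volume_preserving_toLp (Fin 2)).comp
    ((volume_preserving_finTwoArrow ℝ).symm)
  exact h

lemma pp_d0 (s t : ℝ) : HasDerivAt (fun r => pp (r, t)) (e2 0) s := by
  have : (fun r => pp (r, t)) = fun r => r • e2 0 + t • e2 1 := by
    ext r i; fin_cases i <;> simp [pp, e2]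
  rw [this]
  simpa using ((hasDerivAt_id s).smul_const (e2 0)).add_const (t • e2 1)

lemma pp_d1 (s t : ℝ) : HasDerivAt (fun r => pp (s, r)) (e2 1) t := by
  have : (fun r => pp (s, r)) = fun r => r • e2 1 + s • e2 0 := by
    ext r i; fin_cases i <;> simp [pp, e2]
  rw [this]
  simpa using ((hasDerivAt_id t).smul_const (e2 1)).add_const (s • e2 0)

lemma e2_le (u : E2 → ℂ) (x : E2) (j : Fin 2) : ‖fderiv ℝ u x (e2 j)‖ₑ ≤ ‖fderiv ℝ u x‖ₑ := by
  have := (fderiv ℝ u x).le_opNorm (e2 j)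
  rw [show ‖e2 j‖ = 1 by simp [e2], mul_one] at this
  rwa [enorm_le_iff_norm_le]

lemma gn (u : E2 → ℂ) (hu : Differentiable ℝ u) (hi : ∫⁻ x, ‖u x‖ₑ < ⊤) :
    ∫⁻ x, ‖u x‖ₑ ^ 2 ≤ (∫⁻ x, ‖fderiv ℝ u x‖ₑ) ^ 2 := by
  have hum : Measurable u := hu.continuous.measurable
  have hpm : Measurable pp := pp_mp.measurable
  have hdm : ∀ j, Measurable fun x => fderiv ℝ u x (e2 j) := fun j =>
    measurable_fderiv_apply_const ℝ u (e2 j)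
  have hfm : Measurable fun x => ‖fderiv ℝ u x‖ₑ := (measurable_fderiv ℝ u).enorm
  have hup : Measurable fun w => ‖u (pp w)‖ₑ := (hum.comp hpm).enorm
  have m0 : Measurable fun w => ‖fderiv ℝ u (pp w) (e2 0)‖ₑ := ((hdm 0).comp hpm).enorm
  have m1 : Measurable fun w => ‖fderiv ℝ u (pp w) (e2 1)‖ₑ := ((hdm 1).comp hpm).enorm
  rw [← pp_mp.lintegral_comp hum.enorm] at hi
  rw [← pp_mp.lintegral_comp (hum.enorm.pow_const 2), ← pp_mp.lintegral_comp hfm]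
  set F : ℝ → ℝ≥0∞ := fun t => ∫⁻ s, ‖fderiv ℝ u (pp (s, t)) (e2 0)‖ₑ with hF
  set G : ℝ → ℝ≥0∞ := fun s => ∫⁻ t, ‖fderiv ℝ u (pp (s, t)) (e2 1)‖ₑ with hG
  have hFm : Measurable F := m0.lintegral_prod_left'
  have hGm : Measurable G := m1.lintegral_prod_right'
  have a1 : ∀ᵐ s : ℝ, ∀ t, ‖u (pp (s, t))‖ₑ ≤ G s := by
    have h := hi
    rw [Measure.volume_eq_prod, lintegral_prod _ hup.aemeasurable] at h
    filter_upwards [ae_lt_top hup.lintegral_prod_right' h.ne] with s hs t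
    exact line_bound (fun r => u (pp (s, r))) (fun r => fderiv ℝ u (pp (s, r)) (e2 1))
      (fun r => (hu (pp (s, r))).hasFDerivAt.comp_hasDerivAt r (pp_d1 s r))
      ((hdm 1).comp (hpm.comp measurable_prodMk_left)) hs t
  have a2 : ∀ᵐ t : ℝ, ∀ s, ‖u (pp (s, t))‖ₑ ≤ F t := by
    have h := hi
    rw [Measure.volume_eq_prod, lintegral_prod_symm _ hup.aemeasurable] at h
    filter_upwards [ae_lt_top hup.lintegral_prod_left' h.ne] with t ht s
    exact line_bound (fun r => u (pp (r, t))) (fun r => fderiv ℝ u (pp (r, t)) (e2 0))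
      (fun r => (hu (pp (r, t))).hasFDerivAt.comp_hasDerivAt r (pp_d0 r t))
      ((hdm 0).comp (hpm.comp measurable_prodMk_right)) ht s
  have b1 : ∀ᵐ w : ℝ × ℝ, ‖u (pp w)‖ₑ ≤ G w.1 := by
    have := (Measure.quasiMeasurePreserving_fst (μ := (volume : Measure ℝ))
      (ν := (volume : Measure ℝ))).ae a1
    filter_upwards [this] with w hw using hw w.2
  have b2 : ∀ᵐ w : ℝ × ℝ, ‖u (pp w)‖ₑ ≤ F w.2 := by
    have := (Measure.quasiMeasurePreserving_snd (μ := (volume : Measure ℝ))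
      (ν := (volume : Measure ℝ))).ae a2
    filter_upwards [this] with w hw using hw w.1
  calc ∫⁻ w, ‖u (pp w)‖ₑ ^ 2 ≤ ∫⁻ w : ℝ × ℝ, G w.1 * F w.2 := by
        apply lintegral_mono_ae
        filter_upwards [b1, b2] with w h1 h2
        rw [sq]; exact mul_le_mul' h1 h2
    _ = (∫⁻ s, G s) * ∫⁻ t, F t := by
        rw [Measure.volume_eq_prod, lintegral_prod_mul hGm.aemeasurable hFm.aemeasurable]
    _ ≤ (∫⁻ w, ‖fderiv ℝ u (pp w)‖ₑ) * (∫⁻ w, ‖fderiv ℝ u (pp w)‖ₑ) := by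
        apply mul_le_mul'
        · rw [hG, ← lintegral_prod _ m1.aemeasurable]
          exact lintegral_mono fun w => e2_le u _ 1
        · rw [hF, ← lintegral_prod_symm _ m0.aemeasurable]
          exact lintegral_mono fun w => e2_le u _ 0
    _ = _ := (sq _).symm

lemma cs {f g : E2 → ℝ≥0∞} (hf : Measurable f) (hg : Measurable g) :
    (∫⁻ x, f x * g x) ^ 2 ≤ (∫⁻ x, f x ^ 2) * ∫⁻ x, g x ^ 2 := by
  have h := ENNReal.lintegral_mul_le_Lp_mul_Lq (volume : Measure E2)
    Real.HolderConjugate.two_two hf.aemeasurable hg.aemeasurable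
  have h2 := pow_le_pow_left' h 2
  simp only [Pi.mul_apply, ENNReal.rpow_ofNat] at h2
  refine h2.trans (le_of_eq ?_)
  rw [mul_pow, ← ENNReal.rpow_natCast, ← ENNReal.rpow_natCast, ← ENNReal.rpow_mul,
    ← ENNReal.rpow_mul]
  norm_num

lemma fderiv_pow_enorm (φ : E2 → ℂ) (hφ : Differentiable ℝ φ) (n : ℕ) (x : E2) :
    ‖fderiv ℝ (fun x => φ x ^ n) x‖ₑ = n * ‖φ x‖ₑ ^ (n - 1) * ‖fderiv ℝ φ x‖ₑ := by
  rw [fderiv_fun_pow n (hφ x), enorm_smul]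
  have : ‖(n : ℂ)‖ₑ = n := by
    rw [← ofReal_norm, Complex.norm_natCast, ENNReal.ofReal_natCast]
  simp [enorm_mul, this]

/-- `L⁶` bound. -/
lemma six (φ : E2 → ℂ) (hφ : Differentiable ℝ φ) (A D : ℝ≥0∞)
    (hA : ∫⁻ x, ‖φ x‖ₑ ^ 2 = A) (hD : ∫⁻ x, ‖fderiv ℝ φ x‖ₑ ^ 2 = D) (hAD : A + D < ⊤) :
    ∫⁻ x, ‖φ x‖ₑ ^ 6 ≤ 9 * (A + D) ^ 3 := by
  have hm : Measurable fun x => ‖φ x‖ₑ := hφ.continuous.measurable.enorm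
  have hfm : Measurable fun x => ‖fderiv ℝ φ x‖ₑ := (measurable_fderiv ℝ φ).enorm
  have hAt : A < ⊤ := lt_of_le_of_lt le_self_add hAD
  have h4 : ∫⁻ x, ‖φ x‖ₑ ^ 4 ≤ 4 * A * D := by
    have h := gn (fun x => φ x ^ 2) (hφ.pow 2) (by simpa only [enorm_pow, hA] using hAt)
    simp only [fderiv_pow_enorm φ hφ, enorm_pow, ← pow_mul] at h
    refine h.trans ?_
    have : ∀ x, ((2 : ℕ) : ℝ≥0∞) * ‖φ x‖ₑ ^ (2 - 1) * ‖fderiv ℝ φ x‖ₑ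
      = 2 * (‖φ x‖ₑ * ‖fderiv ℝ φ x‖ₑ) := fun x => by simp [mul_assoc]
    simp only [this]
    rw [lintegral_const_mul _ (by fun_prop), mul_pow, mul_assoc, ← hA, ← hD]
    exact mul_le_mul' (by norm_num) (cs hm hfm)
  have h4t : ∫⁻ x, ‖φ x‖ₑ ^ 4 < ⊤ := by
    refine h4.trans_lt ?_
    have hDt : D < ⊤ := lt_of_le_of_lt le_add_self hAD
    finiteness
  have h3 : ∫⁻ x, ‖φ x‖ₑ ^ 3 < ⊤ := by
    calc ∫⁻ x, ‖φ x‖ₑ ^ 3 ≤ ∫⁻ x, (‖φ x‖ₑ ^ 2 + ‖φ x‖ₑ ^ 4) := by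
          apply lintegral_mono
          intro x
          rcases le_total (‖φ x‖ₑ) 1 with h | h
          · exact (pow_le_pow_right_of_le_one' h (by norm_num)).trans le_self_add
          · exact (pow_le_pow_right' h (by norm_num)).trans le_add_self
      _ = A + ∫⁻ x, ‖φ x‖ₑ ^ 4 := by rw [lintegral_add_left (hm.pow_const 2), hA]
      _ < ⊤ := ENNReal.add_lt_top.2 ⟨hAt, h4t⟩
  have h := gn (fun x => φ x ^ 3) (hφ.pow 3) (by simpa only [enorm_pow] using h3)
  simp only [fderiv_pow_enorm φ hφ, enorm_pow, ← pow_mul] at h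
  refine h.trans ?_
  have : ∀ x, ((3 : ℕ) : ℝ≥0∞) * ‖φ x‖ₑ ^ (3 - 1) * ‖fderiv ℝ φ x‖ₑ
    = 3 * (‖φ x‖ₑ ^ 2 * ‖fderiv ℝ φ x‖ₑ) := fun x => by simp [mul_assoc]
  simp only [this]
  rw [lintegral_const_mul _ (by fun_prop), mul_pow]
  have h5 := cs (hm.pow_const 2) hfm
  simp only [← pow_mul] at h5
  have h4' : 4 * A * D ≤ (A + D) ^ 2 := by
    lift A to NNReal using hAt.ne
    lift D to NNReal using (lt_of_le_of_lt le_add_self hAD).ne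
    norm_cast
    rw [← NNReal.coe_le_coe]; push_cast
    nlinarith [sq_nonneg ((A : ℝ) - D)]
  calc _ ≤ (3 : ℝ≥0∞) ^ 2 * ((∫⁻ x, ‖φ x‖ₑ ^ 4) * D) := by rw [← hD]; gcongr
    _ ≤ 3 ^ 2 * ((A + D) ^ 2 * (A + D)) := by
        gcongr
        · exact h4.trans h4'
        · exact le_add_self
    _ = _ := by ring

/-- near kernel, radial profile -/
def kr (R y : ℝ) : ℝ := (Set.Iio (1 : ℝ)).indicator (fun y => ((max R y) ^ 2)⁻¹) y

def kn (R : ℝ) (x : E2) : ℝ≥0∞ := ENNReal.ofReal (kr R ‖x‖)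

lemma kr_meas (R : ℝ) : Measurable (kr R) :=
  Measurable.indicator (by fun_prop) measurableSet_Iio

lemma kn_meas (R : ℝ) : Measurable (kn R) := ((kr_meas R).comp measurable_norm).ennreal_ofReal

lemma kr_nonneg (R y : ℝ) : 0 ≤ kr R y := Set.indicator_nonneg (fun _ _ => by positivity) _

lemma kn_int (R : ℝ) (h0 : 0 < R) (h1 : R < 1) : ∫⁻ x, kn R x ≤
    ENNReal.ofReal (2 * volume.real (Metric.ball (0 : E2) 1) * (1 + -Real.log R)) := by
  set q : ℝ → ℝ := fun y => (Set.Ioc 0 R).indicator (fun _ => R⁻¹) y +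
    (Set.Ioc R 1).indicator (fun y => y⁻¹) y with hq
  have qi1 : IntegrableOn (fun _ : ℝ => R⁻¹) (Set.Ioc 0 R) := by simp
  have qi2 : IntegrableOn (fun y : ℝ => y⁻¹) (Set.Ioc R 1) := by
    rw [← intervalIntegrable_iff_integrableOn_Ioc_of_le h1.le]
    apply intervalIntegral.intervalIntegrable_inv
    · intro x hx
      rw [Set.uIcc_of_le h1.le] at hx
      have := hx.1
      linarith
    · fun_prop
  have qi1' := (integrable_indicator_iff measurableSet_Ioc).2 qi1
  have qi2' := (integrable_indicator_iff measurableSet_Ioc).2 qi2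
  have qi : Integrable q := qi1'.add qi2'
  have qint : ∫ y, q y = 1 + -Real.log R := by
    rw [hq, integral_add qi1' qi2', integral_indicator measurableSet_Ioc,
      integral_indicator measurableSet_Ioc, ← intervalIntegral.integral_of_le h1.le,
      ← intervalIntegral.integral_of_le h0.le, integral_inv_of_pos h0 one_pos]
    simp [h0.ne']
  have q0 : ∀ y, 0 ≤ q y := fun y => add_nonneg
    (Set.indicator_nonneg (fun _ _ => by positivity) _)
    (Set.indicator_nonneg (fun y hy => by have := hy.1; exact inv_nonneg.2 (by linarith)) _)
  have hfr : Module.finrank ℝ E2 = 2 := by simp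
  have bd : ∀ y ∈ Set.Ioi (0 : ℝ), y * kr R y ≤ q y := by
    intro y hy
    have hy : 0 < y := hy
    by_cases hy1 : y < 1
    · have e : kr R y = ((max R y) ^ 2)⁻¹ := by simp [kr, hy1]
      rw [e]
      rcases le_or_gt y R with h | h
      · have : q y = R⁻¹ := by simp [hq, hy, h, not_lt.2 h]
        rw [this, max_eq_left h, ← div_eq_mul_inv, div_le_iff₀ (by positivity)]
        field_simp
        exact h
      · have : q y = y⁻¹ := by simp [hq, h, hy1.le, not_le.2 h]
        rw [this, max_eq_right h.le]
        apply le_of_eq; field_simp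
    · have e : kr R y = 0 := by simp [kr, hy1]
      rw [e, mul_zero]; exact q0 y
  have ii : IntegrableOn (fun y => y ^ (Module.finrank ℝ E2 - 1) • kr R y) (Set.Ioi 0) := by
    refine Integrable.mono' qi.integrableOn ?_ ?_
    · have := kr_meas R
      exact Measurable.aestronglyMeasurable (by fun_prop)
    · rw [ae_restrict_iff' measurableSet_Ioi]
      filter_upwards with y hy
      have hy' : 0 < y := hy
      rw [hfr]
      simp only [Nat.add_one_sub_one, pow_one, smul_eq_mul]
      rw [Real.norm_of_nonneg (mul_nonneg hy'.le (kr_nonneg R y))]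
      exact bd y hy
  have I : Integrable (fun x : E2 => kr R ‖x‖) := (integrable_fun_norm_addHaar volume).2 ii
  have := ofReal_integral_eq_lintegral_ofReal I (by filter_upwards with x using kr_nonneg R _)
  unfold kn
  rw [← this]
  apply ENNReal.ofReal_le_ofReal
  rw [integral_fun_norm_addHaar volume (kr R)]
  rw [hfr] at ii ⊢
  simp only [Nat.add_one_sub_one, pow_one, smul_eq_mul, nsmul_eq_mul] at ii ⊢
  rw [mul_assoc, Nat.cast_ofNat]
  gcongr
  rw [← qint]
  calc _ ≤ ∫ y in Set.Ioi (0 : ℝ), q y :=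
        setIntegral_mono_on ii qi.integrableOn measurableSet_Ioi bd
    _ ≤ _ := setIntegral_le_integral qi (by filter_upwards with y using q0 y)

lemma perp_norm (x : E2) : ‖perp x‖ = ‖x‖ := by
  simp [perp, EuclideanSpace.norm_eq, Fin.sum_univ_two, add_comm]

lemma K_bound (R : ℝ) (h0 : 0 < R) (x : E2) : ENNReal.ofReal (‖K R x‖ ^ 2) ≤ kn R x + 1 := by
  have hm : 0 < max R ‖x‖ := lt_max_of_lt_left h0
  have h : ‖K R x‖ ^ 2 ≤ ((max R ‖x‖) ^ 2)⁻¹ := by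
    rw [K, norm_smul, perp_norm, norm_inv, Real.norm_of_nonneg (by positivity), mul_pow]
    have : ‖x‖ ^ 2 ≤ (max R ‖x‖) ^ 2 := by gcongr; exact le_max_right _ _
    calc _ ≤ ((max R ‖x‖ ^ 2)⁻¹) ^ 2 * (max R ‖x‖) ^ 2 := by gcongr
      _ = _ := by field_simp
  refine (ENNReal.ofReal_le_ofReal h).trans ?_
  by_cases hx : ‖x‖ < 1
  · refine le_trans (le_of_eq ?_) le_self_add
    simp [kn, kr, hx]
  · refine le_trans ?_ le_add_self
    rw [ENNReal.ofReal_le_one]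
    apply inv_le_one_of_one_le₀
    have : 1 ≤ max R ‖x‖ := (not_lt.1 hx).trans (le_max_right _ _)
    nlinarith

lemma amgm (a b c : ℝ≥0∞) : a * b * c ≤ a ^ 3 + b ^ 3 + c ^ 3 := by
  have key : ∀ m : ℝ≥0∞, a ≤ m → b ≤ m → c ≤ m → a * b * c ≤ m ^ 3 := fun m h1 h2 h3 => by
    calc a * b * c ≤ m * m * m := by gcongr
      _ = m ^ 3 := by ring
  rcases le_total a b with h | h
  · rcases le_total b c with h' | h'
    · exact (key c (h.trans h') h' le_rfl).trans le_add_self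
    · exact (key b h le_rfl h').trans (le_add_self.trans le_self_add)
  · rcases le_total a c with h' | h'
    · exact (key c h' (h.trans h') le_rfl).trans le_add_self
    · exact (key a le_rfl h h').trans (le_self_add.trans le_self_add)

lemma triple (k a : E2 → ℝ≥0∞) (hk : Measurable k) (ha : Measurable a) :
    ∫⁻ x, a x * (∫⁻ y, k (x - y) * a y) ^ 2 ≤ 3 * (∫⁻ x, k x) ^ 2 * ∫⁻ x, a x ^ 3 := by
  set L := ∫⁻ x, k x with hL
  have hkx : ∀ x, Measurable fun y => k (x - y) := fun x => hk.comp (by fun_prop)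
  have hkk : Measurable fun w : E2 × E2 => k (w.1 - w.2) := hk.comp (by fun_prop)
  have hLx : ∀ x, ∫⁻ y, k (x - y) = L := fun x => lintegral_sub_left_eq_self k x
  have hLy : ∀ y, ∫⁻ x, k (x - y) = L := fun y => lintegral_sub_right_eq_self k y
  set A : E2 → ℝ≥0∞ := fun x => a x ^ 3 with hA
  have hAm : Measurable A := ha.pow_const 3
  set N : E2 → ℝ≥0∞ := fun x => ∫⁻ y, k (x - y) * A y with hN
  have hNm : Measurable N :=
    Measurable.lintegral_prod_right' (f := fun w : E2 × E2 => k (w.1 - w.2) * A w.2)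
      (hkk.mul (hAm.comp measurable_snd))
  have hNi : ∫⁻ x, N x = L * ∫⁻ x, A x := by
    rw [hN, lintegral_lintegral_swap (hkk.mul (hAm.comp measurable_snd)).aemeasurable,
      ← lintegral_const_mul _ hAm]
    congr 1; ext y
    rw [lintegral_mul_const _ (by fun_prop), hLy]
  have step : ∀ x, a x * (∫⁻ y, k (x - y) * a y) ^ 2 ≤ L ^ 2 * A x + 2 * L * N x := by
    intro x
    have e : a x * (∫⁻ y, k (x - y) * a y) ^ 2 =
        ∫⁻ y, ∫⁻ z, k (x - y) * k (x - z) * (a x * a y * a z) := by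
      rw [sq, ← mul_assoc, mul_comm (a x), mul_assoc,
        ← lintegral_mul_const _ (by fun_prop)]
      congr 1; ext y
      rw [← lintegral_const_mul _ (by fun_prop), ← lintegral_const_mul _ (by fun_prop)]
      congr 1; ext z
      ring
    rw [e]
    calc _ ≤ ∫⁻ y, ∫⁻ z, ((k (x - y) * (A x + A y)) * k (x - z) +
              k (x - y) * (k (x - z) * A z)) := by
            refine lintegral_mono fun y => lintegral_mono fun z => ?_
            refine (mul_le_mul_right (amgm (a x) (a y) (a z)) _).trans (le_of_eq ?_)
            simp only [hA]; ring
      _ = ∫⁻ y, ((k (x - y) * (A x + A y)) * L + k (x - y) * N x) := by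
            congr 1; ext y
            rw [lintegral_add_left ((hkx x).const_mul _), lintegral_const_mul _ (hkx x),
              lintegral_const_mul _ (by fun_prop), hLx]
      _ = ∫⁻ y, ((k (x - y) * (A x * L + N x)) + k (x - y) * A y * L) := by
            congr 1; ext y; ring
      _ = L * (A x * L + N x) + N x * L := by
            rw [lintegral_add_left ((hkx x).mul_const _), lintegral_mul_const _ (hkx x),
              lintegral_mul_const _ (by fun_prop), hLx]
      _ = _ := by ring
  calc _ ≤ ∫⁻ x, (L ^ 2 * A x + 2 * L * N x) := lintegral_mono step
    _ = _ := by
      rw [lintegral_add_left (hAm.const_mul _), lintegral_const_mul _ hAm,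
        lintegral_const_mul _ hNm, hNi]
      ring

lemma whole (k a : E2 → ℝ≥0∞) (hk : Measurable k) (ha : Measurable a) :
    ∫⁻ w : E2 × E2 × E2, (k (w.1 - w.2.1) + 1) * (k (w.1 - w.2.2) + 1) *
      (a w.1 * a w.2.1 * a w.2.2) ≤
    6 * (∫⁻ x, k x) ^ 2 * (∫⁻ x, a x ^ 3) + 2 * (∫⁻ x, a x) ^ 3 := by
  have hkk : Measurable fun w : E2 × E2 => k (w.1 - w.2) := hk.comp (by fun_prop)
  have hkx : ∀ x, Measurable fun y => k (x - y) := fun x => hk.comp (by fun_prop)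
  have hk1 : Measurable fun w : E2 × E2 × E2 => k (w.1 - w.2.1) := hk.comp (by fun_prop)
  have hk2 : Measurable fun w : E2 × E2 × E2 => k (w.1 - w.2.2) := hk.comp (by fun_prop)
  have hm : Measurable fun w : E2 × E2 × E2 => (k (w.1 - w.2.1) + 1) * (k (w.1 - w.2.2) + 1) *
      (a w.1 * a w.2.1 * a w.2.2) := by fun_prop
  rw [Measure.volume_eq_prod, lintegral_prod _ hm.aemeasurable]
  set I := ∫⁻ x, a x with hI
  set N : E2 → ℝ≥0∞ := fun x => ∫⁻ y, k (x - y) * a y with hN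
  have hNm : Measurable N :=
    Measurable.lintegral_prod_right' (f := fun w : E2 × E2 => k (w.1 - w.2) * a w.2)
      (hkk.mul (ha.comp measurable_snd))
  have e : ∀ x, ∫⁻ v : E2 × E2, (k (x - v.1) + 1) * (k (x - v.2) + 1) *
      (a x * a v.1 * a v.2) = a x * (N x + I) ^ 2 := by
    intro x
    have m1 : Measurable fun y => (k (x - y) + 1) * a y := ((hkx x).add_const 1).mul ha
    have i1 : ∫⁻ y, (k (x - y) + 1) * a y = N x + I := by
      simp only [add_mul, one_mul]
      rw [lintegral_add_right _ ha]
    have : ∀ v : E2 × E2, (k (x - v.1) + 1) * (k (x - v.2) + 1) *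
      (a x * a v.1 * a v.2) = a x * (((k (x - v.1) + 1) * a v.1) * ((k (x - v.2) + 1) * a v.2)) :=
      fun v => by ring
    simp only [this]
    rw [lintegral_const_mul _ (by fun_prop),
      Measure.volume_eq_prod, lintegral_prod_mul m1.aemeasurable m1.aemeasurable, i1, sq]
  simp only [e]
  have s2 : ∀ p q : ℝ≥0∞, (p + q) ^ 2 ≤ 2 * p ^ 2 + 2 * q ^ 2 := by
    intro p q
    by_cases hp : p = ⊤
    · simp [hp]
    by_cases hq : q = ⊤
    · simp [hq]
    lift p to NNReal using hp
    lift q to NNReal using hq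
    norm_cast
    rw [← NNReal.coe_le_coe]; push_cast
    nlinarith [sq_nonneg ((p : ℝ) - q)]
  calc _ ≤ ∫⁻ x, (2 * (a x * N x ^ 2) + 2 * I ^ 2 * a x) := by
        refine lintegral_mono fun x => (mul_le_mul_right (s2 (N x) I) (a x)).trans (le_of_eq ?_)
        ring
    _ = 2 * (∫⁻ x, a x * N x ^ 2) + 2 * I ^ 2 * I := by
        rw [lintegral_add_right _ (ha.const_mul _), lintegral_const_mul _ ha,
          lintegral_const_mul _ (by fun_prop)]
    _ ≤ 2 * (3 * (∫⁻ x, k x) ^ 2 * ∫⁻ x, a x ^ 3) + 2 * I ^ 2 * I := by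
        gcongr
        exact triple k a hk ha
    _ = _ := by ring

end S12

/-- Estimate (2.26): there is `C > 0` such that for all `0 < R < e⁻¹` and all
`φ ∈ H¹(ℝ², ℂ)`,
`∭ (K_R(x−y)·K_R(x−z))² |φ(x)|²|φ(y)|²|φ(z)|² ≤ C |log R|² ‖φ‖_{H¹}⁶`. -/
theorem statement12 :
    ∃ C : ℝ, 0 < C ∧ ∀ R : ℝ, 0 < R → R < Real.exp (-1) →
      ∀ φ : E2 → ℂ, Differentiable ℝ φ → H1 φ < ⊤ →
        ∫⁻ w : E2 × E2 × E2,
            ENNReal.ofReal ((⟪K R (w.1 - w.2.1), K R (w.1 - w.2.2)⟫ : ℝ) ^ 2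
              * ‖φ w.1‖ ^ 2 * ‖φ w.2.1‖ ^ 2 * ‖φ w.2.2‖ ^ 2)
          ≤ ENNReal.ofReal (C * (-Real.log R) ^ 2) * H1 φ ^ 6 := by
  set B := volume.real (Metric.ball (0 : E2) 1) with hB
  have hB0 : 0 ≤ B := measureReal_nonneg
  refine ⟨54 * (4 * B) ^ 2 + 2, by positivity, ?_⟩
  intro R h0 hR φ hφ hH
  have hlog : 1 ≤ -Real.log R := by
    have := Real.log_lt_log h0 hR
    rw [Real.log_exp] at this
    linarith
  have hR1 : R < 1 := hR.trans (by rw [Real.exp_lt_one_iff]; norm_num)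
  have hm : Measurable fun x => ‖φ x‖ₑ ^ 2 := hφ.continuous.measurable.enorm.pow_const 2
  obtain ⟨A, hA⟩ : ∃ A, ∫⁻ x, ‖φ x‖ₑ ^ 2 = A := ⟨_, rfl⟩
  obtain ⟨D, hD⟩ : ∃ D, ∫⁻ x, ‖fderiv ℝ φ x‖ₑ ^ 2 = D := ⟨_, rfl⟩
  have hH1 : H1 φ = (A + D) ^ (1 / 2 : ℝ) := by
    have l2 : ∀ {F : Type} [NormedAddCommGroup F] (f : E2 → F),
        eLpNorm f 2 volume ^ 2 = ∫⁻ x, ‖f x‖ₑ ^ 2 := by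
      intro F _ f
      rw [eLpNorm_eq_lintegral_rpow_enorm_toReal (by norm_num) (by norm_num),
        ← ENNReal.rpow_natCast, ← ENNReal.rpow_mul]
      norm_num
    rw [H1, l2, l2, hA, hD]
  have hAD : A + D < ⊤ := by
    by_contra h
    rw [not_lt, top_le_iff] at h
    rw [hH1, h] at hH
    simp at hH
  have hH6 : H1 φ ^ 6 = (A + D) ^ 3 := by
    rw [hH1, ← ENNReal.rpow_natCast, ← ENNReal.rpow_mul, ← ENNReal.rpow_natCast]
    norm_num
  rw [hH6]
  have h6 := S12.six φ hφ A D hA hD hAD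
  have hw := S12.whole (S12.kn R) (fun x => ‖φ x‖ₑ ^ 2) (S12.kn_meas R) hm
  simp only [← pow_mul, hA] at hw
  have hL : ∫⁻ x, S12.kn R x ≤ ENNReal.ofReal (4 * B * (-Real.log R)) := by
    refine (S12.kn_int R h0 hR1).trans (ENNReal.ofReal_le_ofReal ?_)
    rw [← hB]
    nlinarith
  calc _ ≤ ∫⁻ w : E2 × E2 × E2, (S12.kn R (w.1 - w.2.1) + 1) * (S12.kn R (w.1 - w.2.2) + 1) *
      (‖φ w.1‖ₑ ^ 2 * ‖φ w.2.1‖ₑ ^ 2 * ‖φ w.2.2‖ₑ ^ 2) := by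
        refine lintegral_mono fun w => ?_
        have hin : (⟪K R (w.1 - w.2.1), K R (w.1 - w.2.2)⟫ : ℝ) ^ 2 ≤
            ‖K R (w.1 - w.2.1)‖ ^ 2 * ‖K R (w.1 - w.2.2)‖ ^ 2 := by
          rw [← mul_pow, ← sq_abs]
          gcongr
          exact abs_real_inner_le_norm _ _
        have en : ∀ x, ENNReal.ofReal (‖φ x‖ ^ 2) = ‖φ x‖ₑ ^ 2 := fun x => by
          rw [ENNReal.ofReal_pow (norm_nonneg _), ofReal_norm]
        rw [ENNReal.ofReal_mul (by positivity), ENNReal.ofReal_mul (by positivity),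
          ENNReal.ofReal_mul (by positivity), en, en, en, mul_assoc, mul_assoc, ← mul_assoc (‖φ w.1‖ₑ ^ 2)]
        refine mul_le_mul' ?_ le_rfl
        refine (ENNReal.ofReal_le_ofReal hin).trans ?_
        rw [ENNReal.ofReal_mul (by positivity)]
        exact mul_le_mul' (S12.K_bound R h0 _) (S12.K_bound R h0 _)
    _ ≤ 6 * (∫⁻ x, S12.kn R x) ^ 2 * (∫⁻ x, ‖φ x‖ₑ ^ 6) + 2 * A ^ 3 := hw
    _ ≤ 6 * (ENNReal.ofReal (4 * B * (-Real.log R))) ^ 2 * (9 * (A + D) ^ 3) +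
          2 * (A + D) ^ 3 := by
        gcongr
        exact le_self_add
    _ = ENNReal.ofReal (54 * (4 * B * (-Real.log R)) ^ 2 + 2) * (A + D) ^ 3 := by
        have hz : 0 ≤ 4 * B * (-Real.log R) := by nlinarith
        generalize 4 * B * (-Real.log R) = z at hz
        rw [ENNReal.ofReal_add (by positivity) (by norm_num), ENNReal.ofReal_mul (by norm_num),
          ENNReal.ofReal_pow hz, ENNReal.ofReal_ofNat, ENNReal.ofReal_ofNat]
        ring
    _ ≤ _ := by
        gcongr
        nlinarith
end
end
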